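/- arXiv:1710.07889 — 2 statements merged into one kernel-verified Lean document; each statement's English description precedes it below -/
import Mathlib

section
/- Let l and r be nonnegative integers and let α, β, γ be real numbers with γ < 1 − l, such that β + r + 1 and α are not nonpositive integers, β is not a nonpositive integer, 1 + β − γ is not a nonpositive integer, (α)_l ≠ 0, and (1+β−γ)_k ≠ 0, (1+β−α−l)_k ≠ 0 for 0 ≤ k ≤ r. Then ₃F₂(β, α+l, γ; β+r+1, α; 1) = (β)_{r+1} (α−β)_l Γ(1−γ) Γ(β) / ( (α)_l Γ(1+β−γ) · r! ) · ₃F₂(−r, β, 1+β−α; 1+β−γ, 1+β−α−l; 1), where the series on the right-hand side terminates after r+1 terms. -/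
open Finset

/-- Pochhammer symbol `(a)ₙ = a(a+1)⋯(a+n-1)` for natural `n`. -/
noncomputable def poch (a : ℝ) (n : ℕ) : ℝ := Polynomial.eval a (ascPochhammer ℝ n)

/-- Pochhammer symbol `(a)ₖ` for integer `k`: for `k ≥ 0` the ascending product,
and `(a)₋ₖ = (-1)ᵏ/(1-a)ₖ` for `k ≥ 0`. -/
noncomputable def pochZ (a : ℝ) (k : ℤ) : ℝ :=
  if 0 ≤ k then poch a k.toNat else (-1) ^ (-k).toNat / poch (1 - a) (-k).toNat

/-- The (generally non-terminating) Clausen series `₃F₂(a,b,c;d,e;1)`. -/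
noncomputable def F32 (a b c d e : ℝ) : ℝ :=
  ∑' n : ℕ, poch a n * poch b n * poch c n / (poch d n * poch e n * n.factorial)

/-- A terminating `₃F₂(a,b,c;d,e;1)` summed over `k = 0, …, N`. -/
noncomputable def F32sum (N : ℕ) (a b c d e : ℝ) : ℝ :=
  ∑ k ∈ Finset.range (N + 1),
    poch a k * poch b k * poch c k / (poch d k * poch e k * k.factorial)

/-- The Kummer confluent hypergeometric function `₁F₁(a;b;x)`. -/
noncomputable def F11 (a b x : ℝ) : ℝ :=
  ∑' n : ℕ, poch a n * x ^ n / (poch b n * n.factorial)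

/-!
Expanding `1 / (β + n)_{r+1}` in partial fractions in `n` turns the left-hand series into a
combination of the sums `∑ₙ (γ)ₙ / n! * p(n) / (b + n)` with `b = β + k`, `0 ≤ k ≤ r`, and
`p(n) = (α + n)_l`. Each of them equals `p(-b) * B(b, 1 - γ)`: dividing `p` by `X + b` leaves the
remainder `p(-b)`, and the quotient contributes nothing because `∑ₙ (γ)ₙ / n! * q(n) = 0` for
every polynomial `q` of degree less than `-γ`. For `b > 0` the sum `∑ₙ (γ)ₙ / n! / (b + n)` is the
Beta integral with `(1 - x)^(-γ)` expanded in its binomial series, and a telescoping recurrence in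
`b` extends its value to every `b` that is not a nonpositive integer.

The coefficient `(γ)ₙ / n!` is `Ring.multichoose γ n` in Mathlib.
-/

open Filter Asymptotics MeasureTheory Polynomial Topology
open ProbabilityTheory (beta beta_eq_betaIntegralReal)

section Pochhammer

variable {S : Type*} [CommSemiring S]

lemma ascPochhammer_eval_add (a : S) (m n : ℕ) :
    (ascPochhammer S (m + n)).eval a =
      (ascPochhammer S m).eval a * (ascPochhammer S n).eval (a + m) := by
  simp [← ascPochhammer_mul]

lemma ascPochhammer_eval_eq_prod (a : S) (n : ℕ) :
    (ascPochhammer S n).eval a = ∏ k ∈ range n, (a + k) := by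
  induction n with
  | zero => simp
  | succ n ih => rw [ascPochhammer_succ_eval, ih, prod_range_succ]

lemma ascPochhammer_eval_mul_comm (a : S) (m n : ℕ) :
    (ascPochhammer S m).eval a * (ascPochhammer S n).eval (a + m) =
      (ascPochhammer S n).eval a * (ascPochhammer S m).eval (a + n) := by
  rw [← ascPochhammer_eval_add, ← ascPochhammer_eval_add, add_comm]

variable {R : Type*} [CommRing R]

lemma ascPochhammer_eval_one_sub (a : R) (n : ℕ) :
    (ascPochhammer R n).eval (1 - a) = (-1) ^ n * (ascPochhammer R n).eval (a - n) := by
  rw [← neg_sub a 1, ascPochhammer_eval_neg_eq_descPochhammer,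
    descPochhammer_eval_eq_ascPochhammer]
  congr 2; ring

lemma ascPochhammer_eval_sub_natCast_mul (a : R) (l k : ℕ) :
    (ascPochhammer R l).eval (a - k) * (ascPochhammer R k).eval (1 - a - l) =
      (ascPochhammer R l).eval a * (ascPochhammer R k).eval (1 - a) := by
  have split := ascPochhammer_eval_mul_comm (a - k) k l
  rw [sub_add_cancel] at split
  rw [sub_sub, ascPochhammer_eval_one_sub, ascPochhammer_eval_one_sub,
    add_sub_right_comm]
  linear_combination -(-1) ^ k * split

lemma ascPochhammer_eval_neg_natCast (r k : ℕ) :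
    (ascPochhammer R k).eval (-(r : R)) = (-1) ^ k * (k.factorial * r.choose k) := by
  rw [ascPochhammer_eval_neg_eq_descPochhammer, descPochhammer_eval_eq_descFactorial,
    Nat.descFactorial_eq_factorial_mul_choose, Nat.cast_mul]

variable {K : Type*} [Field K]

lemma ascPochhammer_eval_ne_zero {a : K} (ha : ∀ k : ℕ, a ≠ -k) (n : ℕ) :
    (ascPochhammer K n).eval a ≠ 0 := by
  rw [Ne, ascPochhammer_eval_eq_zero_iff]
  rintro ⟨k, -, hk⟩
  exact ha k (by rw [hk, neg_neg])

lemma ascPochhammer_eval_add_natCast_div {a : K} (ha : ∀ k : ℕ, a ≠ -k) (m n : ℕ) :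
    (ascPochhammer K n).eval (a + m) / (ascPochhammer K n).eval a =
      (ascPochhammer K m).eval (a + n) / (ascPochhammer K m).eval a := by
  rw [div_eq_div_iff (ascPochhammer_eval_ne_zero ha n) (ascPochhammer_eval_ne_zero ha m),
    mul_comm, ascPochhammer_eval_mul_comm, mul_comm]

lemma fwdDiff_iter_inv {x : K} (hx : ∀ k : ℕ, x ≠ -k) (r : ℕ) :
    (fwdDiff 1)^[r] (·⁻¹) x = (-1) ^ r * r.factorial / (ascPochhammer K (r + 1)).eval x := by
  induction r generalizing x with
  | zero => simp
  | succ r ih =>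
    have hx' (k : ℕ) : x + 1 ≠ -k := fun h ↦ hx (k + 1) (by push_cast; linear_combination h)
    have hsucc : x + (r + 1) ≠ 0 := fun h ↦ hx (r + 1) (by push_cast; linear_combination h)
    have shift := ascPochhammer_eval_mul_comm x 1 (r + 1)
    simp only [ascPochhammer_one, eval_X, Nat.cast_one, Nat.cast_add] at shift
    have h0 := ascPochhammer_eval_ne_zero hx (r + 1)
    have h1 := ascPochhammer_eval_ne_zero hx' (r + 1)
    rw [Function.iterate_succ_apply', fwdDiff, ih hx', ih hx,
      ascPochhammer_succ_eval (r + 1), Nat.factorial_succ]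
    push_cast
    field_simp
    linear_combination -(-1) ^ r * (r.factorial : K) * shift

lemma sum_range_choose_div_add {x : K} (hx : ∀ k : ℕ, x ≠ -k) (r : ℕ) :
    ∑ k ∈ range (r + 1), (-1) ^ k * r.choose k / (x + k) =
      r.factorial / (ascPochhammer K (r + 1)).eval x := by
  have expand := fwdDiff_iter_eq_sum_shift (1 : K) (·⁻¹) r x
  rw [fwdDiff_iter_inv hx] at expand
  calc ∑ k ∈ range (r + 1), (-1) ^ k * (r.choose k : K) / (x + k)
      = (-1) ^ r * ∑ k ∈ range (r + 1),
          ((-1 : ℤ) ^ (r - k) * r.choose k) • (x + k • (1 : K))⁻¹ := by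
        rw [mul_sum]
        refine sum_congr rfl fun k hk ↦ ?_
        obtain ⟨j, rfl⟩ := Nat.exists_eq_add_of_le (Nat.lt_succ_iff.mp (mem_range.mp hk))
        have sign : (-1 : K) ^ (k + j) * (-1) ^ j = (-1) ^ k := by
          rw [pow_add, mul_assoc, ← mul_pow, neg_one_mul, neg_neg, one_pow, mul_one]
        rw [← sign]
        simp [div_eq_mul_inv, mul_assoc]
    _ = _ := by rw [← expand, mul_div_assoc, ← mul_assoc, ← mul_pow]; simp

end Pochhammer

section Multichoose

variable {K : Type*} [Field K] [CharZero K]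

lemma multichoose_eq_ascPochhammer_div_factorial (a : K) (n : ℕ) :
    Ring.multichoose a n = (ascPochhammer K n).eval a / n.factorial := by
  rw [eq_div_iff (mod_cast n.factorial_ne_zero), mul_comm, ← nsmul_eq_mul,
    Ring.factorial_nsmul_multichoose_eq_ascPochhammer, ascPochhammer_smeval_eq_eval]

lemma multichoose_succ_mul (a : K) (n : ℕ) :
    Ring.multichoose a (n + 1) * (n + 1) = Ring.multichoose a n * (a + n) := by
  simp only [multichoose_eq_ascPochhammer_div_factorial, ascPochhammer_succ_eval,
    Nat.factorial_succ]
  push_cast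
  field_simp

lemma multichoose_mul_add (a : K) (n : ℕ) :
    Ring.multichoose a n * (a + n) = a * Ring.multichoose (a + 1) n := by
  have h := ascPochhammer_eval_mul_comm a n 1
  simp only [ascPochhammer_one, eval_X, Nat.cast_one] at h
  rw [multichoose_eq_ascPochhammer_div_factorial, multichoose_eq_ascPochhammer_div_factorial,
    div_mul_eq_mul_div, h, mul_div_assoc]

lemma sum_range_multichoose {R : Type*} [NonAssocSemiring R] [Pow R ℕ] [NatPowAssoc R]
    [BinomialRing R] (a : R) (n : ℕ) :
    ∑ k ∈ range (n + 1), Ring.multichoose a k = Ring.multichoose (a + 1) n := by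
  induction n with
  | zero => simp
  | succ n ih => rw [sum_range_succ, ih, Ring.multichoose_succ_succ, add_comm]

end Multichoose

lemma isBigO_inv_add_natCast (b : ℝ) :
    (fun n : ℕ ↦ (b + n)⁻¹) =O[atTop] fun n : ℕ ↦ (n : ℝ)⁻¹ := by
  have b_isLittleO : (fun _ : ℕ ↦ b) =o[atTop] fun n : ℕ ↦ (n : ℝ) :=
    isLittleO_const_left.2 (.inr (tendsto_norm_atTop_atTop.comp tendsto_natCast_atTop_atTop))
  exact (b_isLittleO.add_isEquivalent .refl).inv.isBigO

lemma isBigO_multichoose (γ : ℝ) :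
    Ring.multichoose γ =O[atTop] fun n : ℕ ↦ (n : ℝ) ^ (γ - 1) := by
  by_cases hγ : ∃ m : ℕ, γ = -m
  · obtain ⟨m, rfl⟩ := hγ
    refine (isBigO_zero _ _).congr' ?_ .rfl
    filter_upwards [eventually_gt_atTop m] with n hn
    rw [multichoose_eq_ascPochhammer_div_factorial, ascPochhammer_eval_neg_coe_nat_of_lt hn,
      zero_div]
  push Not at hγ
  have euler := ((Real.GammaSeq_tendsto_Gamma γ).inv₀ (Real.Gamma_ne_zero hγ)).isBigO_one ℝ
  have bound := ((isBigO_refl (fun n : ℕ ↦ (n : ℝ) ^ γ) atTop).mul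
    (isBigO_inv_add_natCast γ)).mul euler
  refine bound.congr' ?_ ?_
  · filter_upwards [eventually_gt_atTop 0] with n hn
    have hadd : γ + n ≠ 0 := fun h ↦ hγ n (eq_neg_of_add_eq_zero_left h)
    rw [multichoose_eq_ascPochhammer_div_factorial, Real.GammaSeq,
      ← ascPochhammer_eval_eq_prod, ascPochhammer_succ_eval]
    field_simp
  · filter_upwards [eventually_gt_atTop 0] with n hn
    rw [mul_one, Real.rpow_sub_one (mod_cast hn.ne'), div_eq_mul_inv]

lemma tendsto_multichoose_atTop_zero {γ : ℝ} (hγ : γ < 1) :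
    Tendsto (Ring.multichoose γ) atTop (𝓝 0) := by
  have decay := (tendsto_rpow_neg_atTop (sub_pos.2 hγ)).comp tendsto_natCast_atTop_atTop
  rw [neg_sub] at decay
  exact (isBigO_multichoose γ).trans_tendsto decay

lemma hasSum_multichoose_of_neg {γ : ℝ} (hγ : γ < 0) : HasSum (Ring.multichoose γ) 0 := by
  have summable : Summable (Ring.multichoose γ) :=
    summable_of_isBigO_nat (Real.summable_nat_rpow.2 (by linarith)) (isBigO_multichoose γ)
  refine (summable.hasSum_iff_tendsto_nat).2 ((tendsto_add_atTop_iff_nat 1).1 ?_)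
  simp only [sum_range_multichoose]
  exact tendsto_multichoose_atTop_zero (by linarith)

lemma eval_eq_add_mul_eval_divByMonic {R : Type*} [CommRing R] (p : R[X]) (a x : R) :
    p.eval x = p.eval a + (x - a) * (p /ₘ (X - C a)).eval x := by
  have division := congrArg (eval x) (X_sub_C_mul_divByMonic_eq_sub_modByMonic p a)
  simp only [modByMonic_X_sub_C_eq_C_eval, eval_mul, eval_sub, eval_X, eval_C] at division
  rw [division, add_sub_cancel]

lemma hasSum_multichoose_mul_eval {γ : ℝ} (p : ℝ[X]) (hp : p.natDegree < -γ) :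
    HasSum (fun n : ℕ ↦ Ring.multichoose γ n * p.eval (n : ℝ)) 0 := by
  induction hd : p.natDegree generalizing γ p with
  | zero =>
    rw [hd] at hp
    rw [eq_C_of_natDegree_eq_zero hd]
    simpa using (hasSum_multichoose_of_neg (by simpa using hp)).mul_right (p.coeff 0)
  | succ d ih =>
    rw [hd, Nat.cast_succ] at hp
    set q := p /ₘ (X - C (-γ))
    have hq : q.natDegree = d := by
      rw [natDegree_divByMonic p (monic_X_sub_C _), natDegree_X_sub_C, hd, Nat.add_sub_cancel]
    have constant := (hasSum_multichoose_of_neg (by linarith)).mul_right (p.eval (-γ))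
    have quotient := (ih (γ := γ + 1) q (by rw [hq]; linarith) hq).mul_left γ
    have total := constant.add quotient
    rw [zero_mul, mul_zero, add_zero] at total
    refine total.congr_fun fun n ↦ ?_
    rw [eval_eq_add_mul_eval_divByMonic p (-γ) n, ← mul_assoc γ, ← multichoose_mul_add]
    ring

lemma summable_multichoose_div {γ : ℝ} (hγ : γ < 1) (b : ℝ) :
    Summable fun n : ℕ ↦ Ring.multichoose γ n / (b + n) := by
  refine summable_of_isBigO_nat (Real.summable_nat_rpow.2 (by linarith : γ - 1 - 1 < -1)) ?_
  refine ((isBigO_multichoose γ).mul (isBigO_inv_add_natCast b)).congr' (.of_eq rfl) ?_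
  filter_upwards [eventually_gt_atTop 0] with n hn
  rw [Real.rpow_sub_one (mod_cast hn.ne') (γ - 1), div_eq_mul_inv]

lemma hasSum_multichoose_mul_pow (γ : ℝ) {x : ℝ} (hx : |x| < 1) :
    HasSum (fun n ↦ Ring.multichoose γ n * x ^ n) ((1 - x) ^ (-γ)) := by
  have series := (Real.one_div_one_sub_rpow_hasFPowerSeriesOnBall_zero γ).hasSum (y := x)
    (by simpa [enorm_eq_nnnorm, ← NNReal.coe_lt_coe] using hx)
  rw [Real.rpow_neg (by linarith [le_abs_self x])]
  simpa [FormalMultilinearSeries.ofScalars_apply_eq, Ring.multichoose_eq, mul_comm] using series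

lemma integrableOn_Ioo_rpow_sub_one {s : ℝ} (hs : 0 < s) :
    IntegrableOn (fun x : ℝ ↦ x ^ (s - 1)) (Set.Ioo 0 1) :=
  (intervalIntegral.integrableOn_Ioo_rpow_iff zero_lt_one).2 (by linarith)

lemma integral_Ioo_rpow_sub_one {s : ℝ} (hs : 0 < s) :
    ∫ x in Set.Ioo (0 : ℝ) 1, x ^ (s - 1) = s⁻¹ := by
  rw [← integral_Ioc_eq_integral_Ioo, ← intervalIntegral.integral_of_le zero_le_one,
    integral_rpow (.inl (by linarith)), sub_add_cancel, Real.one_rpow, Real.zero_rpow hs.ne',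
    sub_zero, one_div]

lemma integral_Ioo_rpow_mul_one_sub_rpow {a b : ℝ} (ha : 0 < a) (hb : 0 < b) :
    ∫ x in Set.Ioo (0 : ℝ) 1, x ^ (a - 1) * (1 - x) ^ (b - 1) = beta a b := by
  have complexify : Complex.betaIntegral a b =
      ∫ x in Set.Ioo (0 : ℝ) 1, ((x ^ (a - 1) * (1 - x) ^ (b - 1) : ℝ) : ℂ) := by
    rw [Complex.betaIntegral, intervalIntegral.integral_of_le zero_le_one,
      integral_Ioc_eq_integral_Ioo]
    refine setIntegral_congr_fun measurableSet_Ioo fun x hx ↦ ?_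
    have hx1 : 0 ≤ 1 - x := sub_nonneg.2 hx.2.le
    simp only [Complex.ofReal_mul, Complex.ofReal_cpow hx.1.le, Complex.ofReal_cpow hx1,
      Complex.ofReal_sub, Complex.ofReal_one]
  rw [beta_eq_betaIntegralReal a b ha hb, complexify, integral_complex_ofReal, Complex.ofReal_re]

lemma hasSum_multichoose_div_of_pos {γ b : ℝ} (hγ : γ < 1) (hb : 0 < b) :
    HasSum (fun n : ℕ ↦ Ring.multichoose γ n / (b + n)) (beta b (1 - γ)) := by
  have hbn (n : ℕ) : 0 < b + n := by positivity
  have term_norm (n : ℕ) : ∫ x in Set.Ioo (0 : ℝ) 1, ‖Ring.multichoose γ n * x ^ (b + n - 1)‖ =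
      ‖Ring.multichoose γ n / (b + n)‖ := by
    rw [norm_div, Real.norm_of_nonneg (hbn n).le, div_eq_mul_inv,
      ← integral_Ioo_rpow_sub_one (hbn n), ← integral_const_mul]
    refine setIntegral_congr_fun measurableSet_Ioo fun x hx ↦ ?_
    simp only [norm_mul, Real.norm_of_nonneg (Real.rpow_nonneg hx.1.le _)]
  have interchange := hasSum_integral_of_summable_integral_norm
    (fun n : ℕ ↦ (integrableOn_Ioo_rpow_sub_one (hbn n)).const_mul (Ring.multichoose γ n))
    (by simpa only [term_norm] using (summable_multichoose_div hγ b).norm)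
  have kernel : ∫ x in Set.Ioo (0 : ℝ) 1, ∑' n : ℕ, Ring.multichoose γ n * x ^ (b + n - 1) =
      beta b (1 - γ) := by
    rw [← integral_Ioo_rpow_mul_one_sub_rpow hb (sub_pos.2 hγ)]
    refine setIntegral_congr_fun measurableSet_Ioo fun x hx ↦ ?_
    have hx1 : |x| < 1 := abs_lt.2 ⟨by linarith [hx.1], hx.2⟩
    have binomial := (hasSum_multichoose_mul_pow γ hx1).mul_left (x ^ (b - 1))
    rw [sub_sub_cancel_left, ← binomial.tsum_eq]
    refine tsum_congr fun n ↦ ?_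
    rw [add_sub_right_comm, Real.rpow_add hx.1, Real.rpow_natCast]
    ring
  rw [kernel] at interchange
  refine interchange.congr_fun fun n ↦ ?_
  rw [integral_const_mul, integral_Ioo_rpow_sub_one (hbn n), div_eq_mul_inv]

lemma sum_range_multichoose_div_sub {γ b : ℝ} (hb : ∀ k : ℕ, b ≠ -k) (n : ℕ) :
    ∑ k ∈ range n, ((b + (1 - γ)) * (Ring.multichoose γ k / (b + 1 + k)) -
        b * (Ring.multichoose γ k / (b + k))) =
      -(Ring.multichoose γ n * (n / (n + b))) := by
  have hbk (k : ℕ) : b + k ≠ 0 := fun h ↦ hb k (eq_neg_of_add_eq_zero_left h)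
  induction n with
  | zero => simp
  | succ n ih =>
    have hn := hbk n
    have hn1 : b + 1 + n ≠ 0 := by simpa [add_right_comm, ← add_assoc] using hbk (n + 1)
    rw [sum_range_succ, ih, Nat.cast_succ, ← mul_div_assoc (Ring.multichoose γ (n + 1)),
      multichoose_succ_mul, add_comm (n : ℝ) b, show (n : ℝ) + 1 + b = b + 1 + n by ring]
    field_simp
    ring

lemma hasSum_multichoose_div_of_add_one {γ b S : ℝ} (hγ : γ < 1) (hb : ∀ k : ℕ, b ≠ -k)
    (hS : HasSum (fun n : ℕ ↦ Ring.multichoose γ n / (b + 1 + n)) S) :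
    HasSum (fun n : ℕ ↦ Ring.multichoose γ n / (b + n)) ((b + (1 - γ)) / b * S) := by
  have hb0 : b ≠ 0 := by simpa using hb 0
  have hT := (summable_multichoose_div hγ b).hasSum
  set T := ∑' n : ℕ, Ring.multichoose γ n / (b + n)
  have partial_sums := ((hS.mul_left (b + (1 - γ))).sub (hT.mul_left b)).tendsto_sum_nat
  simp only [sum_range_multichoose_div_sub hb] at partial_sums
  have boundary :=
    ((tendsto_multichoose_atTop_zero hγ).mul (tendsto_natCast_div_add_atTop b)).neg
  have balance := tendsto_nhds_unique partial_sums boundary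
  have value : (b + (1 - γ)) / b * S = T := by
    field_simp
    linear_combination balance
  rwa [value]

-- When `b + s` is a pole of `Γ`, the junk values `Γ (b + s) = 0` and `x / 0 = 0` give
-- `beta b s = 0`, which is the value of the analytic continuation of the Beta function there.
lemma beta_eq_div_mul_beta_add_one {b : ℝ} (hb : b ≠ 0) (s : ℝ) :
    beta b s = (b + s) / b * beta (b + 1) s := by
  rw [beta, beta, Real.Gamma_add_one hb, add_right_comm]
  rcases eq_or_ne (b + s) 0 with hbs | hbs
  · simp [hbs]
  · rw [Real.Gamma_add_one hbs]
    field_simp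

lemma hasSum_multichoose_div {γ b : ℝ} (hγ : γ < 1) (hb : ∀ k : ℕ, b ≠ -k) :
    HasSum (fun n : ℕ ↦ Ring.multichoose γ n / (b + n)) (beta b (1 - γ)) := by
  obtain ⟨N, hN⟩ := exists_nat_gt (-b)
  induction N generalizing b with
  | zero => exact hasSum_multichoose_div_of_pos hγ (by simpa using hN)
  | succ N ih =>
    have hb0 : b ≠ 0 := by simpa using hb 0
    rw [beta_eq_div_mul_beta_add_one hb0]
    rw [Nat.cast_succ] at hN
    refine hasSum_multichoose_div_of_add_one hγ hb (ih (fun k h ↦ hb (k + 1) ?_) (by linarith))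
    rw [Nat.cast_succ]
    linarith

lemma hasSum_multichoose_mul_eval_div {γ b : ℝ} (hb : ∀ k : ℕ, b ≠ -k) (p : ℝ[X])
    (hp : p.natDegree < 1 - γ) :
    HasSum (fun n : ℕ ↦ Ring.multichoose γ n * p.eval (n : ℝ) / (b + n))
      (p.eval (-b) * beta b (1 - γ)) := by
  have hγ : γ < 1 := by linarith [(Nat.cast_nonneg p.natDegree : (0 : ℝ) ≤ p.natDegree)]
  set q := p /ₘ (X - C (-b))
  have remainder := (hasSum_multichoose_div hγ hb).mul_left (p.eval (-b))
  have quotient : HasSum (fun n : ℕ ↦ Ring.multichoose γ n * q.eval (n : ℝ)) 0 := by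
    rcases Nat.eq_zero_or_pos p.natDegree with hdeg | hdeg
    · have hq : q = 0 := by
        rw [divByMonic_eq_zero_iff (monic_X_sub_C _), degree_X_sub_C]
        exact (natDegree_eq_zero_iff_degree_le_zero.1 hdeg).trans_lt zero_lt_one
      simp [hq]
    · refine hasSum_multichoose_mul_eval q ?_
      rw [natDegree_divByMonic p (monic_X_sub_C _), natDegree_X_sub_C, Nat.cast_pred hdeg]
      linarith
  have total := remainder.add quotient
  rw [add_zero] at total
  refine total.congr_fun fun n ↦ ?_
  have hbn : b + n ≠ 0 := fun h ↦ hb n (eq_neg_of_add_eq_zero_left h)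
  rw [eval_eq_add_mul_eval_divByMonic p (-b) n]
  field_simp
  ring

lemma hasSum_multichoose_mul_eval_div_ascPochhammer {γ b : ℝ} (hb : ∀ k : ℕ, b ≠ -k) (p : ℝ[X])
    (hp : p.natDegree < 1 - γ) (r : ℕ) :
    HasSum (fun n : ℕ ↦
        Ring.multichoose γ n * p.eval (n : ℝ) / (ascPochhammer ℝ (r + 1)).eval (b + n))
      ((∑ k ∈ range (r + 1), (-1) ^ k * r.choose k *
        (p.eval (-(b + k)) * beta (b + k) (1 - γ))) / r.factorial) := by
  have hb_add (k j : ℕ) : b + k ≠ -j := fun h ↦ hb (k + j) (by push_cast; linarith)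
  have termwise := (hasSum_sum fun k (_ : k ∈ range (r + 1)) ↦
    (hasSum_multichoose_mul_eval_div (hb_add k) p hp).mul_left
      ((-1) ^ k * (r.choose k : ℝ))).div_const (r.factorial : ℝ)
  refine termwise.congr_fun fun n ↦ ?_
  have hr : (r.factorial : ℝ) ≠ 0 := mod_cast r.factorial_ne_zero
  rw [eq_div_iff hr, div_mul_eq_mul_div, mul_div_assoc, ← sum_range_choose_div_add (hb_add n),
    mul_sum]
  refine sum_congr rfl fun k _ ↦ ?_
  rw [add_right_comm]
  ring

lemma Gamma_add_natCast {b : ℝ} (hb : ∀ k : ℕ, b ≠ -k) (k : ℕ) :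
    Real.Gamma (b + k) = Real.Gamma b * (ascPochhammer ℝ k).eval b := by
  induction k with
  | zero => simp
  | succ k ih =>
    have hk : b + k ≠ 0 := fun h ↦ hb k (eq_neg_of_add_eq_zero_left h)
    rw [Nat.cast_succ, ← add_assoc, Real.Gamma_add_one hk, ih, ascPochhammer_succ_eval]
    ring

lemma beta_add_natCast {b s : ℝ} (hb : ∀ k : ℕ, b ≠ -k) (hbs : ∀ k : ℕ, b + s ≠ -k) (k : ℕ) :
    beta (b + k) s =
      beta b s * ((ascPochhammer ℝ k).eval b / (ascPochhammer ℝ k).eval (b + s)) := by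
  rw [beta, beta, add_right_comm, Gamma_add_natCast hb, Gamma_add_natCast hbs, div_mul_div_comm]
  ring

lemma F32_add_natCast_eq_tsum_multichoose {α β : ℝ} (hα : ∀ k : ℕ, α ≠ -k)
    (hβ : ∀ k : ℕ, β ≠ -k) (γ : ℝ) (l r : ℕ) :
    F32 β (α + l) γ (β + r + 1) α = poch β (r + 1) / poch α l *
      ∑' n : ℕ, Ring.multichoose γ n * poch (α + n) l / poch (β + n) (r + 1) := by
  rw [F32, ← tsum_mul_left]
  refine tsum_congr fun n ↦ ?_
  have ratio_α := ascPochhammer_eval_add_natCast_div hα l n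
  have ratio_β := ascPochhammer_eval_add_natCast_div hβ (r + 1) n
  rw [Nat.cast_succ, ← add_assoc] at ratio_β
  calc poch β n * poch (α + l) n * poch γ n / (poch (β + r + 1) n * poch α n * n.factorial)
      = poch γ n / n.factorial * (poch (α + l) n / poch α n) /
          (poch (β + r + 1) n / poch β n) := by field_simp
    _ = poch γ n / n.factorial * (poch (α + n) l / poch α l) /
          (poch (β + n) (r + 1) / poch β (r + 1)) := by simp only [poch, ratio_α, ratio_β]
    _ = poch β (r + 1) / poch α l *
          (Ring.multichoose γ n * poch (α + n) l / poch (β + n) (r + 1)) := by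
        rw [multichoose_eq_ascPochhammer_div_factorial, ← poch]
        field_simp

lemma hasSum_multichoose_mul_poch_div_poch {β γ : ℝ} (hβ : ∀ k : ℕ, β ≠ -k) {l : ℕ}
    (hγ : γ < 1 - l) (α : ℝ) (r : ℕ) :
    HasSum (fun n : ℕ ↦ Ring.multichoose γ n * poch (α + n) l / poch (β + n) (r + 1))
      ((∑ k ∈ range (r + 1), (-1) ^ k * r.choose k *
        (poch (α - (β + k)) l * beta (β + k) (1 - γ))) / r.factorial) := by
  let p : ℝ[X] := (ascPochhammer ℝ l).comp (C α + X)
  have eval_p (x : ℝ) : p.eval x = (ascPochhammer ℝ l).eval (α + x) := by simp [p]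
  have natDegree_p : p.natDegree = l := by
    simp [p, natDegree_comp, ascPochhammer_natDegree]
  have hp : p.natDegree < 1 - γ := by rw [natDegree_p]; linarith
  simpa only [poch, eval_p, ← sub_eq_add_neg] using
    hasSum_multichoose_mul_eval_div_ascPochhammer hβ p hp r

lemma mul_F32sum_eq_sum_choose_mul_beta {α β γ : ℝ} (hβ : ∀ k : ℕ, β ≠ -k)
    (hβγ : ∀ k : ℕ, 1 + β - γ ≠ -k) {l r : ℕ}
    (hαβ : ∀ k ≤ r, poch (1 + β - α - l) k ≠ 0) :
    poch (α - β) l * beta β (1 - γ) *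
        F32sum r (-r) β (1 + β - α) (1 + β - γ) (1 + β - α - l) =
      ∑ k ∈ range (r + 1), (-1) ^ k * r.choose k *
        (poch (α - (β + k)) l * beta (β + k) (1 - γ)) := by
  rw [F32sum, mul_sum]
  refine sum_congr rfl fun k hk ↦ ?_
  have hk_ne := hαβ k (Nat.lt_succ_iff.mp (mem_range.mp hk))
  have reflect : poch (α - (β + k)) l =
      poch (α - β) l * poch (1 + β - α) k / poch (1 + β - α - l) k := by
    rw [eq_div_iff hk_ne]
    have h := ascPochhammer_eval_sub_natCast_mul (α - β) l k
    rwa [sub_sub, show 1 - (α - β) = 1 + β - α by ring] at h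
  have hsum : β + (1 - γ) = 1 + β - γ := by ring
  rw [reflect, beta_add_natCast hβ (by simpa only [hsum] using hβγ), hsum]
  simp only [poch, ascPochhammer_eval_neg_natCast]
  field_simp

theorem F32_KarlssonMinton_extension (l r : ℕ) (α β γ : ℝ)
    (hγ : γ < 1 - (l : ℝ))
    (hβr1 : ∀ k : ℕ, β + r + 1 ≠ -(k : ℝ))
    (hα : ∀ k : ℕ, α ≠ -(k : ℝ))
    (hβ : ∀ k : ℕ, β ≠ -(k : ℝ))
    (hβγ : ∀ k : ℕ, 1 + β - γ ≠ -(k : ℝ))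
    (hαl : poch α l ≠ 0)
    (h1 : ∀ k : ℕ, k ≤ r → poch (1 + β - γ) k ≠ 0)
    (h2 : ∀ k : ℕ, k ≤ r → poch (1 + β - α - l) k ≠ 0) :
    F32 β (α + l) γ (β + r + 1) α =
      poch β (r + 1) * poch (α - β) l * Real.Gamma (1 - γ) * Real.Gamma β /
        (poch α l * Real.Gamma (1 + β - γ) * r.factorial) *
        F32sum r (-(r : ℝ)) β (1 + β - α) (1 + β - γ) (1 + β - α - l) := by
  rw [F32_add_natCast_eq_tsum_multichoose hα hβ,
    (hasSum_multichoose_mul_poch_div_poch hβ hγ α r).tsum_eq,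
    ← mul_F32sum_eq_sum_choose_mul_beta hβ hβγ h2, beta, show β + (1 - γ) = 1 + β - γ by ring]
  ring
end

section
/- Let m₁, m₂ be integers with m₁² + m₂² > 0, and let α, γ be real numbers such that α, γ, and γ − α are not integers. Write (x)₊ = max(0, x). For every integer n ≥ max(|m₁|, |m₂ − m₁|), the coefficient L(n) := ( (1−α)_{m₁} / (2−γ)_{m₂} ) · Σ_{k=0}^{n−(m₂)₊} (α)_k (1−α+m₁)_{n−(m₂)₊−k} (−1)^{n−(m₂)₊−k} / ( (γ)_k (2−γ+m₂)_{n−(m₂)₊−k} · k! · (n−(m₂)₊−k)! ) equals the coefficient R(n) := (1−γ)_{m₂} (γ−α)_{m₁−m₂} · Σ_{k=0}^{n−(−m₂)₊} (1−α)_k (α−m₁)_{n−(−m₂)₊−k} (−1)^k / ( (2−γ)_k (γ−m₂)_{n−(−m₂)₊−k} · k! · (n−(−m₂)₊−k)! ), where a sum with negative upper limit is interpreted as 0. -/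
open Finset

/-!
Sum the residues of the rational function
`x ↦ (x + α - A)_A / ((x - N)_{N+1} (x + γ - 1 - M)_{M+1})`, where `N = n - (m₂)₊`, `M = N + m₂` and
`A = N + m₁`. Its poles are `0, …, N` and `1 - γ, …, 1 - γ + M`, and the lower bound on `n` says
exactly that `A ≥ 0` and that the function is `O(x⁻²)` at infinity, so the residues sum to zero.
The residues of the first family are, up to a common factor, the terms of `L(n)`. The substitution
`x ↦ x + 1 - γ` exchanges the two families, so those of the second family are the terms of a sum of
the same shape as `L(n)`. Kummer's transformation `e^t ₁F₁(a; c; -t) = ₁F₁(c - a; c; t)`, applied to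
both factors of a product, identifies that sum with `R(n)`.
-/

open Polynomial (X C)

/-- Being a real number that is not an integer: the genericity condition under which every
Pochhammer symbol of integer index is defined and nonzero. -/
def NonInteger (a : ℝ) : Prop := ∀ k : ℤ, a ≠ k

namespace NonInteger

variable {a : ℝ}

lemma add_intCast (ha : NonInteger a) (k : ℤ) : NonInteger (a + k) := fun j hj =>
  ha (j - k) (by push_cast; linarith)

lemma sub_intCast (ha : NonInteger a) (k : ℤ) : NonInteger (a - k) := fun j hj =>
  ha (j + k) (by push_cast; linarith)

lemma intCast_sub (ha : NonInteger a) (k : ℤ) : NonInteger (k - a) := fun j hj =>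
  ha (k - j) (by push_cast; linarith)

lemma one_sub (ha : NonInteger a) : NonInteger (1 - a) := by
  simpa using ha.intCast_sub 1

lemma ne_zero (ha : NonInteger a) : a ≠ 0 := by
  simpa using ha 0

lemma ne_neg_natCast (ha : NonInteger a) (n : ℕ) : a ≠ -n := by
  simpa using ha (-n)

end NonInteger

section Pochhammer

@[simp]
lemma poch_zero (a : ℝ) : poch a 0 = 1 := by
  simp [poch]

lemma poch_succ (a : ℝ) (n : ℕ) : poch a (n + 1) = poch a n * (a + n) :=
  ascPochhammer_succ_eval n a

lemma poch_add (a : ℝ) (m n : ℕ) : poch a (m + n) = poch a m * poch (a + m) n := by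
  simp [poch, ← ascPochhammer_mul, Polynomial.eval_comp]

lemma poch_ne_zero {a : ℝ} (ha : ∀ k : ℕ, a ≠ -k) (n : ℕ) : poch a n ≠ 0 := by
  rw [poch, Ne, ascPochhammer_eval_eq_zero_iff]
  rintro ⟨k, -, hk⟩
  exact ha k (by linarith)

lemma poch_sub_natCast_add_one (x : ℝ) (n : ℕ) :
    poch (x - n + 1) n = ∏ j ∈ range n, (x - j) := by
  rw [poch, ← descPochhammer_eval_eq_ascPochhammer, descPochhammer_eval_eq_prod_range]

lemma poch_neg_sub_natCast_add_one (a : ℝ) (n : ℕ) :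
    poch (-a - n + 1) n = (-1) ^ n * poch a n := by
  have h := ascPochhammer_eval_neg_eq_descPochhammer ℝ (-a) n
  rw [neg_neg, descPochhammer_eval_eq_ascPochhammer] at h
  rw [poch, poch, h, ← mul_assoc, pow_mul_pow_eq_one n (by norm_num), one_mul]

@[simp]
lemma pochZ_natCast (a : ℝ) (n : ℕ) : pochZ a n = poch a n := by
  simp [pochZ]

lemma pochZ_neg_natCast (a : ℝ) (n : ℕ) : pochZ a (-n) = (-1) ^ n / poch (1 - a) n := by
  obtain rfl | hn := n.eq_zero_or_pos
  · simp [pochZ]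
  · simp [pochZ, hn.ne']

@[simp]
lemma pochZ_zero (a : ℝ) : pochZ a 0 = 1 := by
  simpa using pochZ_natCast a 0

lemma pochZ_neg (a : ℝ) (k : ℤ) : pochZ a (-k) = (-1) ^ k / pochZ (1 - a) k := by
  obtain ⟨n, rfl | rfl⟩ := k.eq_nat_or_neg
  · rw [pochZ_neg_natCast, pochZ_natCast, zpow_natCast]
  · rw [neg_neg, pochZ_neg_natCast, pochZ_natCast, sub_sub_cancel, zpow_neg, zpow_natCast]
    field_simp
    rw [pow_right_comm, neg_one_sq, one_pow, mul_one]

lemma pochZ_ne_zero {a : ℝ} (ha : NonInteger a) (k : ℤ) : pochZ a k ≠ 0 := by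
  obtain ⟨n, rfl | rfl⟩ := k.eq_nat_or_neg
  · rw [pochZ_natCast]
    exact poch_ne_zero ha.ne_neg_natCast n
  · rw [pochZ_neg_natCast]
    exact div_ne_zero (by simp) (poch_ne_zero ha.one_sub.ne_neg_natCast n)

lemma pochZ_add_one {a : ℝ} (ha : NonInteger a) (k : ℤ) :
    pochZ a (k + 1) = pochZ a k * (a + k) := by
  cases k with
  | ofNat n =>
    rw [Int.ofNat_eq_natCast, ← Nat.cast_succ, pochZ_natCast, pochZ_natCast, poch_succ,
      Int.cast_natCast]
  | negSucc n =>
    have hpoch : poch (1 - a) n ≠ 0 := poch_ne_zero ha.one_sub.ne_neg_natCast n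
    have hlast : 1 - a + n ≠ 0 := (ha.one_sub.add_intCast n).ne_zero
    rw [Int.negSucc_eq, show -((n : ℤ) + 1) + 1 = -n by ring, ← Nat.cast_succ,
      pochZ_neg_natCast, pochZ_neg_natCast, poch_succ, pow_succ]
    push_cast
    field_simp
    ring

lemma pochZ_add {a : ℝ} (ha : NonInteger a) (k l : ℤ) :
    pochZ a (k + l) = pochZ a k * pochZ (a + k) l := by
  induction l using Int.induction_on with
  | zero => simp
  | succ n ih =>
    rw [← add_assoc, pochZ_add_one ha, pochZ_add_one (ha.add_intCast k), ih]
    push_cast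
    ring
  | pred n ih =>
    have hlast : a + k + (-n - 1 : ℤ) ≠ 0 := ((ha.add_intCast k).add_intCast _).ne_zero
    have hl := pochZ_add_one ha (k + (-n - 1))
    have hr := pochZ_add_one (ha.add_intCast k) (-n - 1)
    rw [show k + (-(n : ℤ) - 1) + 1 = k + -n by ring, ih] at hl
    rw [sub_add_cancel] at hr
    apply mul_right_cancel₀ hlast
    rw [mul_assoc, ← hr, hl]
    push_cast
    ring

lemma pochZ_mul_pochZ_one_sub {a : ℝ} (ha : NonInteger a) (k l : ℤ) :
    pochZ a k * pochZ (1 - a) l = (-1) ^ l * pochZ (a - l) (l + k) := by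
  have hinv : pochZ a (-l) * pochZ (a - l) l = 1 := by
    simpa [← sub_eq_add_neg] using (pochZ_add ha (-l) l).symm
  have hne : pochZ (1 - a) l ≠ 0 := pochZ_ne_zero ha.one_sub l
  rw [pochZ_neg, div_mul_eq_mul_div, div_eq_one_iff_eq hne] at hinv
  rw [pochZ_add (ha.sub_intCast l), sub_add_cancel, ← mul_assoc, hinv, mul_comm]

lemma pochZ_sub_intCast_add_one (x : ℝ) (N : ℤ) :
    pochZ (x - N) (N + 1) =
      (∏ j ∈ range (N + 1).toNat, (x - j)) / poch (x + 1) (-N - 1).toNat := by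
  obtain ⟨n, hn | hn⟩ := (N + 1).eq_nat_or_neg
  · obtain rfl : N = n - 1 := by lia
    have hpoch := poch_sub_natCast_add_one x n
    rw [sub_add] at hpoch
    simp [hpoch]
  · obtain rfl : N = -n - 1 := by lia
    have hpoch := poch_neg_sub_natCast_add_one (x + 1) n
    rw [show -(x + 1) - n + 1 = 1 - (x - (-n - 1 : ℤ)) by push_cast; ring] at hpoch
    rw [sub_add_cancel, pochZ_neg_natCast, hpoch]
    simp [div_mul_cancel_left₀]

end Pochhammer

section PartialFractions

/-- The residues of `P(x) / (∏ i ∈ s, (x - v i) * ∏ j ∈ t, (x - w j))` sum to zero if this function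
is `O(x⁻²)` at infinity. -/
lemma sum_eval_div_prod_sub_add_sum_eval_div_prod_sub_eq_zero {F ι κ : Type*} [Field F]
    [DecidableEq ι] [DecidableEq κ] {s : Finset ι} {t : Finset κ} {v : ι → F} {w : κ → F}
    (hv : Set.InjOn v s) (hw : Set.InjOn w t) (hvw : ∀ i ∈ s, ∀ j ∈ t, v i ≠ w j)
    {P : Polynomial F} (hP : P.natDegree + 2 ≤ s.card + t.card) :
    ∑ i ∈ s, P.eval (v i) / ((∏ j ∈ s.erase i, (v i - v j)) * ∏ j ∈ t, (v i - w j)) +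
      ∑ i ∈ t, P.eval (w i) / ((∏ j ∈ t.erase i, (w i - w j)) * ∏ j ∈ s, (w i - v j)) = 0 := by
  have hinj : Set.InjOn (Sum.elim v w) (s.disjSum t) := by
    rintro (i | i) hi (j | j) hj hij <;>
      simp only [mem_coe, inl_mem_disjSum, inr_mem_disjSum, Sum.elim_inl,
        Sum.elim_inr] at hi hj hij
    · rw [hv hi hj hij]
    · exact absurd hij (hvw i hi j hj)
    · exact absurd hij.symm (hvw j hj i hi)
    · rw [hw hi hj hij]
  have hdeg : P.degree < (s.disjSum t).card :=
    Polynomial.degree_le_natDegree.trans_lt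
      (by rw [card_disjSum]; exact_mod_cast (by lia : P.natDegree < s.card + t.card))
  have hlagrange := Lagrange.coeff_eq_sum hinj hdeg
  have herase_inl (i : ι) : (s.disjSum t).erase (.inl i) = (s.erase i).disjSum t := by
    ext (x | x) <;> simp
  have herase_inr (i : κ) : (s.disjSum t).erase (.inr i) = s.disjSum (t.erase i) := by
    ext (x | x) <;> simp
  rw [card_disjSum, Polynomial.coeff_eq_zero_of_natDegree_lt (by lia),
    sum_disjSum] at hlagrange
  simpa only [herase_inl, herase_inr, prod_disjSum, Sum.elim_inl, Sum.elim_inr,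
    mul_comm (∏ _ ∈ s, _)] using hlagrange.symm

lemma prod_erase_range_natCast_sub (R : Type*) [CommRing R] (k d : ℕ) :
    ∏ j ∈ (range (k + d + 1)).erase k, ((k : R) - j) =
      k.factorial * ((-1) ^ d * d.factorial) := by
  induction d with
  | zero =>
    rw [add_zero, range_add_one, erase_insert notMem_range_self,
      ← descPochhammer_eval_eq_prod_range, descPochhammer_eval_eq_descFactorial,
      Nat.descFactorial_self]
    simp
  | succ d ih =>
    rw [← add_assoc, range_add_one, erase_insert_of_ne (by lia),
      prod_insert (by simp), ih, Nat.factorial_succ]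
    push_cast
    ring

end PartialFractions

section ResidueSum

/-- The sum of the residues at `x = 0, …, N` of the rational function
`(x + a - A)_A / ((x - N)_{N+1} (x + c - 1 - M)_{M+1})`, which is `0` if `N < 0`. -/
noncomputable def residueSum (a c : ℝ) (A N M : ℤ) : ℝ :=
  ∑ k ∈ range (N + 1).toNat,
    pochZ (a - A + k) A * (-1) ^ (N.toNat - k) /
      (pochZ (c - 1 - M + k) (M + 1) * k.factorial * (N.toNat - k).factorial)

lemma residueSum_eq_sum_div_prod (a c : ℝ) (A : ℕ) (N M : ℤ) :
    residueSum a c A N M =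
      ∑ k ∈ range (N + 1).toNat,
        poch (a - A + k) A * poch (c + k) (-M - 1).toNat /
          ((∏ j ∈ (range (N + 1).toNat).erase k, ((k : ℝ) - j)) *
            ∏ j ∈ range (M + 1).toNat, (k - (1 - c + j))) := by
  refine sum_congr rfl fun k hk => ?_
  rw [mem_range] at hk
  have hown := prod_erase_range_natCast_sub ℝ k (N.toNat - k)
  rw [show k + (N.toNat - k) + 1 = (N + 1).toNat by lia] at hown
  have hother := pochZ_sub_intCast_add_one (c - 1 + k) M
  rw [show c - 1 + k - M = c - 1 - M + k by ring, show c - 1 + k + 1 = c + k by ring] at hother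
  have hprod : ∏ j ∈ range (M + 1).toNat, ((k : ℝ) - (1 - c + j)) =
      ∏ j ∈ range (M + 1).toNat, (c - 1 + k - j) :=
    prod_congr rfl fun j _ => by ring
  rw [hown, hother, hprod, Int.cast_natCast, pochZ_natCast]
  simp only [div_eq_mul_inv, mul_inv, inv_inv, ← inv_pow, inv_neg, inv_one]
  ring

/-- The two sums run over the two families of poles of the same rational function, which the
substitution `x ↦ x + 1 - c` exchanges. -/
lemma residueSum_add_residueSum_eq_zero (a : ℝ) {c : ℝ} (hc : NonInteger c) {A N M : ℤ}
    (hA : 0 ≤ A) (hANM : A ≤ N + M) :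
    residueSum a c A N M + residueSum (1 + a - c) (2 - c) A M N = 0 := by
  lift A to ℕ using hA
  set P : Polynomial ℝ := (ascPochhammer ℝ A).comp (X + C (a - A)) *
    (ascPochhammer ℝ (-N - 1).toNat).comp (X + C 1) *
    (ascPochhammer ℝ (-M - 1).toNat).comp (X + C c) with hP
  have hdeg : P.natDegree ≤ A + (-N - 1).toNat + (-M - 1).toNat := by
    refine Polynomial.natDegree_mul_le_of_le (Polynomial.natDegree_mul_le_of_le ?_ ?_) ?_ <;>
      rw [Polynomial.natDegree_comp, ascPochhammer_natDegree, Polynomial.natDegree_X_add_C, mul_one]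
  have heval (x : ℝ) : P.eval x =
      poch (x + (a - A)) A * poch (x + 1) (-N - 1).toNat * poch (x + c) (-M - 1).toNat := by
    simp [hP, poch, Polynomial.eval_comp]
  have hdisj (i j : ℕ) : (i : ℝ) ≠ 1 - c + j := fun hij =>
    hc (1 + j - i) (by push_cast; linarith)
  have hres := sum_eval_div_prod_sub_add_sum_eval_div_prod_sub_eq_zero
    (s := range (N + 1).toNat) (t := range (M + 1).toNat)
    (v := fun k : ℕ => (k : ℝ)) (w := fun k : ℕ => 1 - c + k) (P := P)
    Nat.cast_injective.injOn ((add_right_injective _).comp Nat.cast_injective).injOn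
    (fun i _ j _ => hdisj i j) (by simp only [card_range]; lia)
  rw [← hres, residueSum_eq_sum_div_prod, residueSum_eq_sum_div_prod]
  congr 1 <;> refine sum_congr rfl fun k hk => ?_ <;> rw [mem_range] at hk
  · rw [heval, show (-N - 1).toNat = 0 by lia, poch_zero, mul_one, add_comm (k : ℝ), add_comm c]
  · rw [heval, show (-M - 1).toNat = 0 by lia, poch_zero, mul_one,
      show 1 + a - c - A + k = 1 - c + k + (a - A) by ring,
      show 2 - c + k = 1 - c + k + 1 by ring]
    congr 2 <;> exact prod_congr rfl fun j _ => by ring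

end ResidueSum

section KummerSeries

open PowerSeries (coeff evalNegHom)

/-- The Kummer function `₁F₁(a; c; t)` as a formal power series in `t`. -/
noncomputable def kummerSeries (a c : ℝ) : PowerSeries ℝ :=
  PowerSeries.mk fun n => poch a n / (poch c n * n.factorial)

/-- The coefficient of `t ^ N` in `₁F₁(a; c; t) * ₁F₁(a'; c'; -t)`, which is `0` if `N < 0`. -/
noncomputable def kummerProductCoeff (a c a' c' : ℝ) (N : ℤ) : ℝ :=
  ∑ k ∈ range (N + 1).toNat,
    poch a k * poch a' (N.toNat - k) * (-1) ^ (N.toNat - k) /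
      (poch c k * poch c' (N.toNat - k) * k.factorial * (N.toNat - k).factorial)

lemma ringChoose_eq_poch_div_factorial (r : ℝ) (n : ℕ) :
    Ring.choose r n = poch (r - n + 1) n / n.factorial := by
  rw [Ring.choose_eq_smul, Polynomial.descPochhammer_smeval_eq_ascPochhammer,
    Polynomial.ascPochhammer_smeval_eq_eval, poch, smul_eq_mul, inv_mul_eq_div]

lemma poch_sub_div_factorial (a c : ℝ) (n : ℕ) :
    poch (c - a) n / n.factorial = ∑ ij ∈ antidiagonal n,
      (-1) ^ ij.1 * poch a ij.1 / ij.1.factorial * (poch (c + ij.1) ij.2 / ij.2.factorial) := by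
  have hvandermonde := Ring.add_choose_eq (r := -a) (s := c + n - 1) n (Commute.all _ _)
  rw [ringChoose_eq_poch_div_factorial, show -a + (c + n - 1) - n + 1 = c - a by ring]
    at hvandermonde
  rw [hvandermonde]
  refine sum_congr rfl fun ij hij => ?_
  obtain rfl := mem_antidiagonal.mp hij
  rw [ringChoose_eq_poch_div_factorial, ringChoose_eq_poch_div_factorial,
    poch_neg_sub_natCast_add_one]
  congr 3
  push_cast
  ring

lemma coeff_evalNegHom {R : Type*} [CommRing R] (f : PowerSeries R) (n : ℕ) :
    coeff n (evalNegHom f) = (-1) ^ n * coeff n f :=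
  PowerSeries.coeff_rescale f (-1) n

lemma evalNegHom_evalNegHom {R : Type*} [CommRing R] (f : PowerSeries R) :
    evalNegHom (evalNegHom f) = f := by
  simp [evalNegHom, PowerSeries.rescale_rescale]

lemma evalNegHom_kummerSeries_mul_exp (a : ℝ) {c : ℝ} (hc : ∀ k : ℕ, c ≠ -k) :
    evalNegHom (kummerSeries a c) * PowerSeries.exp ℝ = kummerSeries (c - a) c := by
  ext n
  have hcoeff : coeff n (kummerSeries (c - a) c) = poch (c - a) n / n.factorial / poch c n := by
    rw [kummerSeries, PowerSeries.coeff_mk, div_div, mul_comm]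
  rw [hcoeff, poch_sub_div_factorial, PowerSeries.coeff_mul, sum_div]
  refine sum_congr rfl fun ij hij => ?_
  obtain rfl := mem_antidiagonal.mp hij
  have hpoch : poch c (ij.1 + ij.2) ≠ 0 := poch_ne_zero hc _
  rw [poch_add] at hpoch ⊢
  have hleft := left_ne_zero_of_mul hpoch
  have hright := right_ne_zero_of_mul hpoch
  rw [coeff_evalNegHom, PowerSeries.coeff_exp, kummerSeries, PowerSeries.coeff_mk]
  simp only [one_div, map_inv₀, map_natCast]
  field_simp

lemma kummerSeries_mul_evalNegHom_kummerSeries (a a' : ℝ) {c c' : ℝ} (hc : ∀ k : ℕ, c ≠ -k)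
    (hc' : ∀ k : ℕ, c' ≠ -k) :
    kummerSeries a c * evalNegHom (kummerSeries a' c') =
      evalNegHom (kummerSeries (c - a) c) * kummerSeries (c' - a') c' := by
  rw [← evalNegHom_kummerSeries_mul_exp a hc, ← evalNegHom_kummerSeries_mul_exp a' hc', map_mul,
    evalNegHom_evalNegHom]
  linear_combination (-kummerSeries a c * evalNegHom (kummerSeries a' c')) *
    PowerSeries.exp_mul_exp_neg_eq_one (A := ℝ)

lemma kummerProductCoeff_eq_sum_sub (a a' : ℝ) {c c' : ℝ} (hc : ∀ k : ℕ, c ≠ -k)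
    (hc' : ∀ k : ℕ, c' ≠ -k) (N : ℤ) :
    kummerProductCoeff a c a' c' N =
      ∑ k ∈ range (N + 1).toNat,
        poch (c - a) k * poch (c' - a') (N.toNat - k) * (-1) ^ k /
          (poch c k * poch c' (N.toNat - k) * k.factorial * (N.toNat - k).factorial) := by
  rw [kummerProductCoeff]
  obtain hN | hN := lt_or_ge N 0
  · simp [show (N + 1).toNat = 0 by lia]
  have hcoeff := congrArg (coeff N.toNat) (kummerSeries_mul_evalNegHom_kummerSeries a a' hc hc')
  simp only [PowerSeries.coeff_mul, Finset.Nat.sum_antidiagonal_eq_sum_range_succ_mk,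
    coeff_evalNegHom, kummerSeries, PowerSeries.coeff_mk] at hcoeff
  rw [show (N + 1).toNat = N.toNat + 1 by lia]
  convert hcoeff using 2 <;> ring

end KummerSeries

section Reflection

lemma neg_one_zpow_mul_self {K : Type*} [Field K] (k : ℤ) : (-1 : K) ^ k * (-1) ^ k = 1 := by
  rw [← mul_zpow, neg_one_mul, neg_neg, one_zpow]

lemma neg_one_zpow_sub {K : Type*} [Field K] (k l : ℤ) :
    (-1 : K) ^ (k - l) = (-1) ^ (k + l) := by
  have hne : (-1 : K) ≠ 0 := neg_ne_zero.mpr one_ne_zero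
  rw [zpow_sub₀ hne, zpow_add₀ hne, div_eq_iff (zpow_ne_zero l hne), mul_assoc,
    neg_one_zpow_mul_self, mul_one]

lemma poch_mul_pochZ_one_sub_mul_poch {a : ℝ} (ha : NonInteger a) (p : ℤ) (j k : ℕ) :
    poch a k * (pochZ (1 - a) p * poch (1 - a + p) j) =
      (-1) ^ (p + j) * pochZ (a - p - j) (p + j + k) := by
  rw [← pochZ_natCast, ← pochZ_natCast, ← pochZ_add ha.one_sub, pochZ_mul_pochZ_one_sub ha,
    Int.cast_add, Int.cast_natCast, sub_sub]

lemma sub_one_mul_poch_mul_pochZ_two_sub_mul_poch {c : ℝ} (hc : NonInteger c) (q : ℤ) (j k : ℕ) :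
    (c - 1) * (poch c k * (pochZ (2 - c) q * poch (2 - c + q) j)) =
      (-1) ^ (q + j) * pochZ (c - 1 - q - j) (q + j + k + 1) := by
  have hc1 : NonInteger (c - 1) := by simpa using hc.sub_intCast 1
  have hpoch : poch (c - 1) (k + 1) = (c - 1) * poch c k := by
    rw [add_comm k, poch_add, Nat.cast_one, sub_add_cancel]
    simp [poch]
  have h := poch_mul_pochZ_one_sub_mul_poch hc1 q j (k + 1)
  rw [hpoch, show 1 - (c - 1) = 2 - c by ring, Nat.cast_succ, ← add_assoc] at h
  rw [← mul_assoc, h]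

lemma pochZ_div_mul_kummerProductCoeff {a c : ℝ} (ha : NonInteger a) (hc : NonInteger c)
    (p q N : ℤ) :
    pochZ (1 - a) p / pochZ (2 - c) q * kummerProductCoeff a c (1 - a + p) (2 - c + q) N =
      (-1) ^ (p + q) * (c - 1) * residueSum a c (N + p) N (N + q) := by
  rw [kummerProductCoeff, residueSum, mul_sum, mul_sum]
  refine sum_congr rfl fun k hk => ?_
  rw [mem_range] at hk
  obtain ⟨j, rfl⟩ : ∃ j : ℕ, N = j + k := ⟨N.toNat - k, by lia⟩
  have hnum := poch_mul_pochZ_one_sub_mul_poch ha p j k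
  have hden := sub_one_mul_poch_mul_pochZ_two_sub_mul_poch hc q j k
  have hc1 : c - 1 ≠ 0 := sub_ne_zero.mpr (by simpa using hc 1)
  have hsign : (-1 : ℝ) ^ (p + j) / (-1) ^ (q + j) = (-1) ^ (p + q) := by
    rw [← zpow_sub₀ (by norm_num), add_sub_add_right_eq_sub, neg_one_zpow_sub]
  rw [show ((j : ℤ) + k).toNat - k = j by lia,
    show a - ((j + k + p : ℤ) : ℝ) + k = a - p - j by push_cast; ring,
    show c - 1 - ((j + k + q : ℤ) : ℝ) + k = c - 1 - q - j by push_cast; ring,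
    show (j : ℤ) + k + p = p + j + k by ring, show (j : ℤ) + k + q = q + j + k by ring]
  calc pochZ (1 - a) p / pochZ (2 - c) q * (poch a k * poch (1 - a + p) j * (-1) ^ j /
        (poch c k * poch (2 - c + q) j * k.factorial * j.factorial))
      = (c - 1) * (poch a k * (pochZ (1 - a) p * poch (1 - a + p) j)) /
          ((c - 1) * (poch c k * (pochZ (2 - c) q * poch (2 - c + q) j))) *
          ((-1) ^ j / (k.factorial * j.factorial)) := by
        field_simp
    _ = (-1) ^ (p + j) / (-1) ^ (q + j) * (c - 1) * (pochZ (a - p - j) (p + j + k) * (-1) ^ j /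
          (pochZ (c - 1 - q - j) (q + j + k + 1) * k.factorial * j.factorial)) := by
        rw [hnum, hden]
        field_simp
    _ = _ := by rw [hsign]

lemma pochZ_div_mul_kummerProductCoeff_reflect {a c : ℝ} (ha : NonInteger a) (hc : NonInteger c)
    (hca : NonInteger (c - a)) {p q N : ℤ} (hp : 0 ≤ N + p) (hpq : p ≤ N + q) :
    pochZ (1 - a) p / pochZ (2 - c) q * kummerProductCoeff a c (1 - a + p) (2 - c + q) N =
      pochZ (1 - c) q * pochZ (c - a) (p - q) *
        kummerProductCoeff (1 + a - c) (2 - c) (c - a + p - q) (c - q) (N + q) := by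
  have ha' : NonInteger (1 + a - c) := by
    simpa [sub_sub_eq_add_sub] using hca.one_sub
  have hc' : NonInteger (2 - c) := by simpa using hc.intCast_sub 2
  have hres := residueSum_add_residueSum_eq_zero a hc (A := N + p) (N := N) (M := N + q) hp (by lia)
  have hreflected := pochZ_div_mul_kummerProductCoeff ha' hc' (p - q) (-q) (N + q)
  have hpoch : pochZ (1 - (1 + a - c)) (p - q) / pochZ (2 - (2 - c)) (-q) =
      (-1) ^ q * (pochZ (1 - c) q * pochZ (c - a) (p - q)) := by
    rw [show 1 - (1 + a - c) = c - a by ring, sub_sub_cancel, pochZ_neg]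
    simp only [div_eq_mul_inv, mul_inv, inv_inv, ← inv_zpow, inv_neg, inv_one]
    ring
  have hsign : (-1 : ℝ) ^ (p - q + -q) = (-1) ^ q * (-1) ^ (p + q) := by
    rw [← sub_eq_add_neg, neg_one_zpow_sub, sub_add_cancel, zpow_add₀ (by norm_num), mul_left_comm,
      neg_one_zpow_mul_self, mul_one]
  rw [hpoch, hsign, show 1 - (1 + a - c) + ((p - q : ℤ) : ℝ) = c - a + p - q by push_cast; ring,
    show 2 - (2 - c) + ((-q : ℤ) : ℝ) = c - q by push_cast; ring,
    show N + q + (p - q) = N + p by ring, show N + q + -q = N by ring] at hreflected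
  rw [pochZ_div_mul_kummerProductCoeff ha hc]
  apply mul_left_cancel₀ (zpow_ne_zero q (by norm_num : (-1 : ℝ) ≠ 0))
  linear_combination (-1) ^ q * (-1) ^ (p + q) * (c - 1) * hres - hreflected

end Reflection

theorem Kummer_coefficients_equal (m₁ m₂ : ℤ) (hm : 0 < m₁ ^ 2 + m₂ ^ 2)
    (α γ : ℝ) (hα : ∀ k : ℤ, α ≠ (k : ℝ)) (hγ : ∀ k : ℤ, γ ≠ (k : ℝ))
    (hγα : ∀ k : ℤ, γ - α ≠ (k : ℝ))
    (n : ℕ) (hn : max |m₁| |m₂ - m₁| ≤ (n : ℤ)) :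
    pochZ (1 - α) m₁ / pochZ (2 - γ) m₂ *
      ∑ k ∈ Finset.range (((n : ℤ) - max 0 m₂ + 1).toNat),
        poch α k * poch (1 - α + (m₁ : ℝ)) (((n : ℤ) - max 0 m₂).toNat - k) *
            (-1 : ℝ) ^ (((n : ℤ) - max 0 m₂).toNat - k) /
          (poch γ k * poch (2 - γ + (m₂ : ℝ)) (((n : ℤ) - max 0 m₂).toNat - k) *
            k.factorial * (((n : ℤ) - max 0 m₂).toNat - k).factorial) =
    pochZ (1 - γ) m₂ * pochZ (γ - α) (m₁ - m₂) *
      ∑ k ∈ Finset.range (((n : ℤ) - max 0 (-m₂) + 1).toNat),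
        poch (1 - α) k * poch (α - (m₁ : ℝ)) (((n : ℤ) - max 0 (-m₂)).toNat - k) *
            (-1 : ℝ) ^ k /
          (poch (2 - γ) k * poch (γ - (m₂ : ℝ)) (((n : ℤ) - max 0 (-m₂)).toNat - k) *
            k.factorial * (((n : ℤ) - max 0 (-m₂)).toNat - k).factorial) := by
  rw [max_le_iff, abs_le, abs_le] at hn
  have hc : NonInteger (2 - γ) := by simpa using NonInteger.intCast_sub hγ 2
  have hc' : NonInteger (γ - m₂) := NonInteger.sub_intCast hγ m₂
  have hN : (n : ℤ) - max 0 (-m₂) = n - max 0 m₂ + m₂ := by lia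
  have hreflect := pochZ_div_mul_kummerProductCoeff_reflect hα hγ hγα
    (p := m₁) (q := m₂) (N := n - max 0 m₂) (by lia) (by lia)
  rw [← hN, kummerProductCoeff_eq_sum_sub _ _ hc.ne_neg_natCast hc'.ne_neg_natCast,
    show 2 - γ - (1 + α - γ) = 1 - α by ring,
    show γ - m₂ - (γ - α + m₁ - m₂) = α - m₁ by ring] at hreflect
  exact hreflect
end
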